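/- For every causal model M and any two binary endogenous variables X, Y ∈ V (with values in {0,1}) such that P_M(X=0, Y=0) > 0: the Probability of Sufficiency computed via the B-semantics equals the Probability of Sufficiency computed in the PO-SCM, i.e., PS^B = P^B((Y=1)_{X←1} | X=0, Y=0) = P^N((Y=1)_{X←1} | X=0, Y=0) = PS^N. -/

import Mathlib

/-!
A world of the PO-SCM is a world of `M` together with values `p` of the potential outcomes, and its
structural equations hold exactly when each variable equals the potential outcome selected by its
parents. Two facts about the distribution of `p` drive the proof. Conditioning it on the actual
world `a` fixes the potential outcomes selected in `a` at their actual values and leaves the others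
untouched, since they are independent; this posterior is the distribution of the potential outcomes
of the actualized refinement `M.refine a` (`CM.WF.ite_solves_poProb`). On the other hand, in the
PO-SCM of any model, each `b` solves the intervened structural equations with the interventional
probability that the model itself gives to `b` (`CM.WF.sum_ite_solves_poProb`). The second fact,
applied to `M.refine a`, says that the PO-SCM conditioned on `a` evaluates basic counterfactuals as
the B-semantics does.
-/

open Finset

noncomputable section

attribute [local instance] Classical.propDecidable

/-- An assignment of values to the variables. -/
abbrev Asg {ν : Type} (Val : ν → Type) : Type := (i : ν) → Val i

/-- A probabilistic causal model (a causal Bayesian network with explicit exogenous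
variables): a signature (variables `ν` with value sets `Val`), a graph given by the
parent map `pa` (with `ord` a witness of acyclicity, and the variables in `exo` being
the roots), and a joint probability distribution that is Markov relative to the graph,
presented by the conditional probability table `cpt i w x = P(i = x | pa i = w|_{pa i})`
of each variable given its parents (for exogenous variables this is the marginal). -/
structure CM (ν : Type) (Val : ν → Type) : Type where
  exo : Finset ν
  pa : ν → Finset ν
  ord : ν → ℕ
  cpt : (i : ν) → Asg Val → Val i → ℝ

/-- A basic counterfactual event `(Y = yv)_{X ← xv}`. -/
structure CFEvent (ν : Type) (Val : ν → Type) : Type where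
  X : Finset ν
  xv : Asg Val
  Y : Finset ν
  yv : Asg Val

namespace CM

variable {ν : Type} {Val : ν → Type}

/-- Well-formedness of a causal model: exogenous variables are roots, the graph is
acyclic, the conditional probability table of each variable depends only on its
parents, and each table is a probability distribution. -/
structure WF [Fintype ν] [∀ i, Fintype (Val i)] (M : CM ν Val) : Prop where
  pa_exo : ∀ i ∈ M.exo, M.pa i = ∅
  acyclic : ∀ i j, j ∈ M.pa i → M.ord j < M.ord i
  cpt_pa : ∀ (i : ν) (w w' : Asg Val) (x : Val i),
    (∀ j ∈ M.pa i, w j = w' j) → M.cpt i w x = M.cpt i w' x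
  cpt_nonneg : ∀ i w x, 0 ≤ M.cpt i w x
  cpt_sum : ∀ i w, ∑ x, M.cpt i w x = 1

variable [Fintype ν] [∀ i, Fintype (Val i)] [∀ i, Nonempty (Val i)]

variable (M : CM ν Val)

/-- The joint distribution `P(U = u, V = v)` (Markov factorization). -/
def joint (w : Asg Val) : ℝ := ∏ i, M.cpt i w (w i)

/-- The interventional distribution `P_{do(X = xv)}` (truncated factorization). -/
def pdo (X : Finset ν) (xv w : Asg Val) : ℝ :=
  if ∀ i ∈ X, w i = xv i then ∏ i ∈ Xᶜ, M.cpt i w (w i) else 0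

/-- `P_{do(X = xv)}(Y = yv | U = u)`, where `u` is the exogenous part of `w`:
the probability of the basic counterfactual `(Y = yv)_{X ← xv}` given the world `w`. -/
def cfBasic (X : Finset ν) (xv : Asg Val) (Y : Finset ν) (yv : Asg Val) (w : Asg Val) : ℝ :=
  (∑ w' : Asg Val,
      if (∀ i ∈ M.exo, w' i = w i) ∧ ∀ i ∈ Y, w' i = yv i then M.pdo X xv w' else 0) /
  (∑ w' : Asg Val, if ∀ i ∈ M.exo, w' i = w i then M.pdo X xv w' else 0)

/-- The probability of a complex counterfactual
`P(y_x, …, z_w) = Σ_{(u,v)} P(y_x | u,v) ⋯ P(z_w | u,v) P(u,v)`. -/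
def cfProb (evs : List (CFEvent ν Val)) : ℝ :=
  ∑ w : Asg Val, (evs.map fun e => M.cfBasic e.X e.xv e.Y e.yv w).prod * M.joint w

/-- Conditional probability of a complex counterfactual given an actual event `Z = zv`:
`P(y_x, …, z_w | Z = zv) = P(y_x, …, z_w, Z = zv) / P(Z = zv)`. -/
def cfProbCond (evs : List (CFEvent ν Val)) (Z : Finset ν) (zv : Asg Val) : ℝ :=
  (∑ w : Asg Val,
      (if ∀ i ∈ Z, w i = zv i then (evs.map fun e => M.cfBasic e.X e.xv e.Y e.yv w).prod
       else 0) * M.joint w) /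
  (∑ w : Asg Val, if ∀ i ∈ Z, w i = zv i then M.joint w else 0)

/-- `M` is a structural causal model: every endogenous variable is a deterministic
function of its parents (the exogenous variables are automatically mutually
independent in this presentation). -/
def IsSCM : Prop :=
  ∀ i ∉ M.exo, ∀ (w : Asg Val) (x : Val i), M.cpt i w x = 0 ∨ M.cpt i w x = 1

/-- The actualized refinement `M^{(u,v)}` of `M` at the actual world `a`:
for each endogenous variable, the conditional distribution given the *actual* values of
its parents is replaced by the point mass at the actual value of the variable. -/
def refine (a : Asg Val) : CM ν Val where
  exo := M.exo
  pa := M.pa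
  ord := M.ord
  cpt := fun i w x =>
    if i ∉ M.exo ∧ ∀ j ∈ M.pa i, w j = a j then (if x = a i then 1 else 0)
    else M.cpt i w x

/-- The B-semantics probability of a basic counterfactual,
`P^B((Y = yv)_{X ← xv} | a) = (P^{a})_{do(X = xv)}(Y = yv | U = u)` where `u` is the
exogenous part of the actual world `a`. -/
def pbBasic (a : Asg Val) (X : Finset ν) (xv : Asg Val) (Y : Finset ν) (yv : Asg Val) : ℝ :=
  (M.refine a).cfBasic X xv Y yv a

/-- The B-semantics probability of a complex counterfactual. -/
def pbProb (evs : List (CFEvent ν Val)) : ℝ :=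
  ∑ w : Asg Val, (evs.map fun e => M.pbBasic w e.X e.xv e.Y e.yv).prod * M.joint w

/-- The conditional B-semantics probability of a complex counterfactual given `Z = zv`. -/
def pbProbCond (evs : List (CFEvent ν Val)) (Z : Finset ν) (zv : Asg Val) : ℝ :=
  (∑ w : Asg Val,
      (if ∀ i ∈ Z, w i = zv i then (evs.map fun e => M.pbBasic w e.X e.xv e.Y e.yv).prod
       else 0) * M.joint w) /
  (∑ w : Asg Val, if ∀ i ∈ Z, w i = zv i then M.joint w else 0)

/-- An assignment of values to the parents of `i`. -/
def PaAsg (i : ν) : Type := (j : {j : ν // j ∈ M.pa i}) → Val j.1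

instance (i : ν) : Fintype (M.PaAsg i) := by unfold PaAsg; infer_instance
instance (i : ν) : Nonempty (M.PaAsg i) := ⟨fun j => Classical.arbitrary (Val j.1)⟩

/-- Extend an assignment of the parents of `i` to a full assignment (arbitrarily). -/
def extendPa (i : ν) (κ : M.PaAsg i) : Asg Val :=
  fun j => if h : j ∈ M.pa i then κ ⟨j, h⟩ else Classical.arbitrary (Val j)

/-- The index type of the potential outcome variables `X_{pa_X}` of the PO-SCM:
one for each endogenous variable `X` and each value `pa_X` of its parents. -/
def POI : Type := Σ i : {i : ν // i ∉ M.exo}, M.PaAsg i.1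

instance : Fintype (POI M) := by unfold POI; infer_instance

/-- The value set of the potential outcome variable `X_{pa_X}` is that of `X`. -/
def POB : POI M → Type := fun p => Val p.1.1

instance (p : POI M) : Fintype (POB M p) := by unfold POB; infer_instance
instance (p : POI M) : Nonempty (POB M p) := by unfold POB; infer_instance

/-- The type of values of the response variable `U_X` of the canonical frame:
functions from values of the parents of `X` to values of `X`. -/
def RType (i : ν) : Type := M.PaAsg i → Val i

instance (i : ν) : Fintype (M.RType i) := by unfold RType; infer_instance
instance (i : ν) : Nonempty (M.RType i) := ⟨fun _ => Classical.arbitrary (Val i)⟩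

/-- The index type of the response variables of the canonical frame:
one for each endogenous variable. -/
def RVI : Type := {i : ν // i ∉ M.exo}

instance : Fintype (RVI M) := by unfold RVI; infer_instance

/-- The value set of the response variable `U_X`. -/
def RB : RVI M → Type := fun p => M.RType p.1

instance (p : RVI M) : Fintype (RB M p) := by unfold RB; infer_instance
instance (p : RVI M) : Nonempty (RB M p) := by unfold RB; infer_instance

end CM

/-- The family of value sets of an extended signature `ν ⊕ β`. -/
def SumVal {ν β : Type} (Val : ν → Type) (B : β → Type) : ν ⊕ β → Type := fun i =>
  match i with
  | .inl j => Val j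
  | .inr b => B b

section SumValInst

variable {ν β : Type} {Val : ν → Type} {B : β → Type}

instance [∀ i, Fintype (Val i)] [∀ b, Fintype (B b)] (i : ν ⊕ β) :
    Fintype (SumVal Val B i) := by
  cases i with
  | inl j => exact inferInstanceAs (Fintype (Val j))
  | inr b => exact inferInstanceAs (Fintype (B b))

instance [∀ i, Nonempty (Val i)] [∀ b, Nonempty (B b)] (i : ν ⊕ β) :
    Nonempty (SumVal Val B i) := by
  cases i with
  | inl j => exact inferInstanceAs (Nonempty (Val j))
  | inr b => exact inferInstanceAs (Nonempty (B b))

/-- Lift an assignment on `ν` to one on `ν ⊕ β` (arbitrary on the new variables). -/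
def liftAsg [∀ b, Nonempty (B b)] (xv : Asg Val) : Asg (SumVal Val B) := fun i =>
  match i with
  | .inl j => xv j
  | .inr b => Classical.arbitrary (B b)

/-- Lift a counterfactual event on the original variables to the extended signature. -/
def liftCFEvent [∀ b, Nonempty (B b)] (e : CFEvent ν Val) : CFEvent (ν ⊕ β) (SumVal Val B) :=
  ⟨e.X.image Sum.inl, liftAsg e.xv, e.Y.image Sum.inl, liftAsg e.yv⟩

variable [Fintype ν] [Fintype β] [∀ i, Fintype (Val i)] [∀ b, Fintype (B b)]
  [∀ i, Nonempty (Val i)] [∀ b, Nonempty (B b)]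

/-- The probability, computed in a model `N` over an extended signature, of a complex
counterfactual over the original variables. -/
def extProb (N : CM (ν ⊕ β) (SumVal Val B)) (evs : List (CFEvent ν Val)) : ℝ :=
  N.cfProb (evs.map liftCFEvent)

/-- The probability, computed in a model `N` over an extended signature, of a complex
counterfactual over the original variables, conditional on an actual event `Z = zv`
over the original variables. -/
def extProbCond (N : CM (ν ⊕ β) (SumVal Val B)) (evs : List (CFEvent ν Val))
    (Z : Finset ν) (zv : Asg Val) : ℝ :=
  N.cfProbCond (evs.map liftCFEvent) (Z.image Sum.inl) (liftAsg zv)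

/-- The probability, computed in a model `N` over an extended signature, of a basic
counterfactual conditional on the values `a` of *all* the original variables
(marginalizing over the added exogenous variables), via the law of total probability. -/
def extBasicCond (N : CM (ν ⊕ β) (SumVal Val B)) (a : Asg Val)
    (X : Finset ν) (xv : Asg Val) (Y : Finset ν) (yv : Asg Val) : ℝ :=
  (∑ w : Asg (SumVal Val B),
      if ∀ i : ν, w (Sum.inl i) = a i then
        N.cfBasic (X.image Sum.inl) (liftAsg xv) (Y.image Sum.inl) (liftAsg yv) w * N.joint w
      else 0) /
  (∑ w : Asg (SumVal Val B), if ∀ i : ν, w (Sum.inl i) = a i then N.joint w else 0)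

end SumValInst

namespace CM

variable {ν : Type} {Val : ν → Type} [Fintype ν] [∀ i, Fintype (Val i)] [∀ i, Nonempty (Val i)]
variable (M : CM ν Val)

/-- The PO-SCM `M^N` of `M`: the structural causal model obtained from `M` by adding,
for each endogenous variable `X` and each value `pa_X` of its parents, an exogenous
potential outcome variable `X_{pa_X}` (with marginal `P_M(X | Pa_X = pa_X)`, all
exogenous variables mutually independent), and the structural equation
`X = X_{pa_X}` whenever `Pa_X = pa_X`. -/
def MN : CM (ν ⊕ POI M) (SumVal Val (POB M)) where
  exo := (M.exo.image Sum.inl) ∪ (univ.image Sum.inr)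
  pa := fun i =>
    match i with
    | .inl j => ((M.pa j).image Sum.inl) ∪
        ((univ.filter fun p : POI M => p.1.1 = j).image Sum.inr)
    | .inr _ => ∅
  ord := fun i =>
    match i with
    | .inl j => M.ord j + 1
    | .inr _ => 0
  cpt := fun i =>
    match i with
    | .inl j => fun w x =>
        if h : j ∈ M.exo then M.cpt j (fun k => w (Sum.inl k)) x
        else if x = w (Sum.inr ⟨⟨j, h⟩, fun k => w (Sum.inl k.1)⟩) then 1 else 0
    | .inr p => fun _ x => M.cpt p.1.1 (M.extendPa p.1.1 p.2) x

/-- `P^N(y_x, …, z_w)`: the probability of a complex counterfactual computed in the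
PO-SCM `M^N`. -/
def pnProb (evs : List (CFEvent ν Val)) : ℝ := extProb M.MN evs

/-- `P^N(y_x, …, z_w | Z = zv)`: the conditional probability of a complex
counterfactual computed in the PO-SCM `M^N`, given an actual event on the
endogenous variables. -/
def pnProbCond (evs : List (CFEvent ν Val)) (Z : Finset ν) (zv : Asg Val) : ℝ :=
  extProbCond M.MN evs Z zv

/-- `P^N((Y = yv)_{X ← xv} | U = u, V = v)`: the probability of a basic counterfactual
computed in the PO-SCM `M^N`, conditional on the exogenous and endogenous variables of
`M` only (marginalizing over the potential outcome variables). -/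
def pnBasicCond (a : Asg Val) (X : Finset ν) (xv : Asg Val) (Y : Finset ν) (yv : Asg Val) : ℝ :=
  extBasicCond M.MN a X xv Y yv

/-- A canonical SCM for `M`, determined by a distribution `q` of the response variables:
the SCM over the canonical frame, which adds for each endogenous variable `X` an
exogenous response variable `U_X` ranging over the functions `f_X : R(Pa_X) → R(X)`,
with the structural equation `X = f_X(Pa_X)` where `f_X` is the value of `U_X`. -/
def canonSCM (q : (p : RVI M) → RType M p.1 → ℝ) : CM (ν ⊕ RVI M) (SumVal Val (RB M)) where
  exo := (M.exo.image Sum.inl) ∪ (univ.image Sum.inr)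
  pa := fun i =>
    match i with
    | .inl j => ((M.pa j).image Sum.inl) ∪
        ((univ.filter fun p : RVI M => p.1 = j).image Sum.inr)
    | .inr _ => ∅
  ord := fun i =>
    match i with
    | .inl j => M.ord j + 1
    | .inr _ => 0
  cpt := fun i =>
    match i with
    | .inl j => fun w x =>
        if h : j ∈ M.exo then M.cpt j (fun k => w (Sum.inl k)) x
        else if x = w (Sum.inr ⟨j, h⟩) (fun k => w (Sum.inl k.1)) then 1 else 0
    | .inr p => fun _ x => q p x

/-- `q` is the distribution of the response variables of a canonical SCM for `M`:
it is a probability distribution (the response variables being mutually independent and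
independent of the exogenous variables of `M`, whose distribution is kept), and it
reproduces the conditional probability tables of `M`:
`P_M(X = x | Pa_X = pa_X) = Σ_{f_X with f_X(pa_X) = x} P(U_X = f_X)`. -/
def IsCanonicalDist (q : (p : RVI M) → RType M p.1 → ℝ) : Prop :=
  (∀ p x, 0 ≤ q p x) ∧ (∀ p, ∑ f, q p f = 1) ∧
  ∀ (p : RVI M) (κ : M.PaAsg p.1) (x : Val p.1),
    M.cpt p.1 (M.extendPa p.1 κ) x = ∑ f ∈ univ.filter (fun f : RType M p.1 => f κ = x), q p f

/-- The distribution of the response variables of the GH-SCM: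
`P(U_X = f_X) = ∏_{pa_X} P_M(X = f_X(pa_X) | Pa_X = pa_X)`. -/
def qGH : (p : RVI M) → RType M p.1 → ℝ := fun p f =>
  ∏ κ : M.PaAsg p.1, M.cpt p.1 (M.extendPa p.1 κ) (f κ)

end CM

/-- A default assignment. -/
def dfltAsg {ν : Type} (Val : ν → Type) [∀ i, Nonempty (Val i)] : Asg Val :=
  fun i => Classical.arbitrary (Val i)

namespace CM

section Interventions

variable {ν : Type} {Val : ν → Type}

/-- The probability of the exogenous part of the world `a`. -/
def exoProb (M : CM ν Val) (a : Asg Val) : ℝ := ∏ i ∈ M.exo, M.cpt i a (a i)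

variable [Fintype ν]

lemma exoProb_refine (M : CM ν Val) (a : Asg Val) : (M.refine a).exoProb a = M.exoProb a :=
  prod_congr rfl fun _ hi => if_neg fun h => h.1 hi

/-- `P_{do(X)}(V = v | U = u)` for the world `b = (u, v)`: the product of the tables of the
endogenous variables outside `X`. The values of `b` on `X` are those of the intervention. -/
def endoProb (M : CM ν Val) (X : Finset ν) (b : Asg Val) : ℝ := ∏ i ∈ M.exoᶜ \ X, M.cpt i b (b i)

lemma joint_eq_exoProb_mul_endoProb (M : CM ν Val) (a : Asg Val) :
    M.joint a = M.exoProb a * M.endoProb ∅ a := by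
  rw [endoProb, sdiff_empty]
  exact (prod_mul_prod_compl M.exo _).symm

lemma endoProb_eq_prod_subtype (M : CM ν Val) (X : Finset ν) (b : Asg Val) :
    M.endoProb X b = ∏ j : {i // i ∉ M.exo}, if j.1 ∈ X then 1 else M.cpt j.1 b (b j.1) := by
  rw [endoProb, sdiff_eq_filter, prod_filter, ← prod_subtype M.exoᶜ (fun _ => mem_compl)
    fun i => if i ∈ X then 1 else M.cpt i b (b i)]
  exact prod_congr rfl fun i _ => ite_not _ _ _

variable [∀ i, Fintype (Val i)]

lemma sum_agree_off_insert {T : Finset ν} {m : ν} (hm : m ∉ T) (a : Asg Val) (f : Asg Val → ℝ) :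
    ∑ b : Asg Val with ∀ i ∉ insert m T, b i = a i, f b
      = ∑ c : Asg Val with ∀ i ∉ T, c i = a i, ∑ x, f (Function.update c m x) := by
  rw [← sum_product' _ _ fun (c : Asg Val) x => f (Function.update c m x)]
  refine sum_nbij' (fun b => (Function.update b m (a m), b m))
    (fun cx => Function.update cx.1 m cx.2) ?_ ?_ ?_ ?_ ?_
  · intro b hb
    simp only [mem_filter_univ, mem_product, mem_univ, and_true] at hb ⊢
    intro i hi
    rcases eq_or_ne i m with rfl | him
    · exact Function.update_self ..
    · rw [Function.update_of_ne him]
      exact hb i (by simp [him, hi])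
  · intro cx hc
    simp only [mem_filter_univ, mem_product, mem_univ, and_true, mem_insert, not_or] at hc ⊢
    intro i hi
    rw [Function.update_of_ne hi.1]
    exact hc i hi.2
  · intro b _
    simp
  · rintro ⟨c, x⟩ hc
    simp only [mem_filter_univ, mem_product, mem_univ, and_true] at hc
    simp [← hc m hm]
  · intro b _
    simp

namespace WF

variable {M : CM ν Val}

lemma cpt_update (hM : M.WF) {i m : ν} (hm : m ∉ M.pa i) (c : Asg Val) (x : Val m) (v : Val i) :
    M.cpt i (Function.update c m x) v = M.cpt i c v :=
  hM.cpt_pa _ _ _ _ fun _ hj => Function.update_of_ne (ne_of_mem_of_not_mem hj hm) _ _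

lemma sum_prod_cpt_update (hM : M.WF) {T : Finset ν} {m : ν} (hm : m ∉ T)
    (hmax : ∀ i ∈ T, M.ord i ≤ M.ord m) (c : Asg Val) :
    ∑ x, ∏ i ∈ insert m T, M.cpt i (Function.update c m x) (Function.update c m x i)
      = ∏ i ∈ T, M.cpt i c (c i) := by
  have hpa : ∀ i, M.ord i ≤ M.ord m → m ∉ M.pa i := fun i hi h =>
    (hM.acyclic i m h).not_ge hi
  have hprod (x : Val m) :
      ∏ i ∈ insert m T, M.cpt i (Function.update c m x) (Function.update c m x i)
        = M.cpt m c x * ∏ i ∈ T, M.cpt i c (c i) := by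
    rw [prod_insert hm, hM.cpt_update (hpa m le_rfl), Function.update_self]
    congr 1
    refine prod_congr rfl fun i hi => ?_
    rw [hM.cpt_update (hpa i (hmax i hi)), Function.update_of_ne (ne_of_mem_of_not_mem hi hm)]
  simp_rw [hprod, ← sum_mul, hM.cpt_sum, one_mul]

/-- With a variable of maximal order summed out first, every other table is left unchanged. -/
lemma sum_prod_cpt (hM : M.WF) (a : Asg Val) (T : Finset ν) :
    ∑ b : Asg Val with ∀ i ∉ T, b i = a i, ∏ i ∈ T, M.cpt i b (b i) = 1 := by
  induction T using Finset.induction_on_max_value M.ord with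
  | empty => simp [← funext_iff, filter_eq']
  | insert m T hm hmax ih =>
    rw [sum_agree_off_insert hm, ← ih]
    exact sum_congr rfl fun c _ => hM.sum_prod_cpt_update hm hmax c

lemma exoProb_congr (hM : M.WF) {a b : Asg Val} (hab : ∀ i ∈ M.exo, b i = a i) :
    M.exoProb b = M.exoProb a := by
  refine prod_congr rfl fun i hi => ?_
  rw [hab i hi]
  exact hM.cpt_pa _ _ _ _ (by simp [hM.pa_exo i hi])

end WF

/-- The worlds that share the exogenous part of the actual world `a` and satisfy both `X = xv` and
`Y = yv`: those in which the counterfactual `(Y = yv)_{X ← xv}` comes true. -/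
def cfWorlds (M : CM ν Val) (X : Finset ν) (xv : Asg Val) (Y : Finset ν) (yv a : Asg Val) :
    Finset (Asg Val) :=
  {b | (∀ i ∈ M.exo, b i = a i) ∧ (∀ i ∈ X, b i = xv i) ∧ ∀ i ∈ Y, b i = yv i}

namespace WF

variable {M : CM ν Val} {X : Finset ν}

lemma pdo_eq (hM : M.WF) (hX : ∀ i ∈ X, i ∉ M.exo) (xv : Asg Val) {a b : Asg Val}
    (hab : ∀ i ∈ M.exo, b i = a i) :
    M.pdo X xv b = if ∀ i ∈ X, b i = xv i then M.exoProb a * M.endoProb X b else 0 := by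
  have hexo : M.exo ⊆ Xᶜ := fun i hi => mem_compl.mpr fun h => hX i h hi
  have hsdiff : Xᶜ \ M.exo = M.exoᶜ \ X := by
    simp only [sdiff_eq_inter_compl, inter_comm]
  rw [pdo, ← hM.exoProb_congr hab, exoProb, endoProb, ← hsdiff, mul_comm, prod_sdiff hexo]

lemma sum_pdo (hM : M.WF) (hX : ∀ i ∈ X, i ∉ M.exo) (xv : Asg Val) (Y : Finset ν)
    (yv a : Asg Val) :
    (∑ b : Asg Val,
      if (∀ i ∈ M.exo, b i = a i) ∧ ∀ i ∈ Y, b i = yv i then M.pdo X xv b else 0)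
      = M.exoProb a * ∑ b ∈ M.cfWorlds X xv Y yv a, M.endoProb X b := by
  rw [cfWorlds, sum_filter, mul_sum]
  refine sum_congr rfl fun b _ => ?_
  by_cases hab : ∀ i ∈ M.exo, b i = a i
  · rw [hM.pdo_eq hX xv hab, ← ite_and, mul_ite, mul_zero]
    exact if_congr (by tauto) rfl rfl
  · rw [if_neg fun h => hab h.1, if_neg fun h => hab h.1, mul_zero]

lemma sum_endoProb (hM : M.WF) (hX : ∀ i ∈ X, i ∉ M.exo) (xv yv a : Asg Val) :
    ∑ b ∈ M.cfWorlds X xv ∅ yv a, M.endoProb X b = 1 := by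
  rw [← hM.sum_prod_cpt (X.piecewise xv a) (M.exoᶜ \ X)]
  refine sum_congr (filter_congr fun b _ => ?_) fun _ _ => rfl
  constructor
  · rintro ⟨hexo, hdo, -⟩ i hi
    by_cases hiX : i ∈ X
    · rw [piecewise_eq_of_mem _ _ _ hiX]
      exact hdo i hiX
    · rw [piecewise_eq_of_notMem _ _ _ hiX]
      exact hexo i (by simpa [hiX] using hi)
  · intro h
    refine ⟨fun i hi => ?_, fun i hi => ?_, by simp⟩
    · rw [h i (by simp [hi]), piecewise_eq_of_notMem _ _ _ fun hiX => hX i hiX hi]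
    · rw [h i (by simp [hi]), piecewise_eq_of_mem _ _ _ hi]

lemma cfBasic_mul_exoProb (hM : M.WF) (hX : ∀ i ∈ X, i ∉ M.exo) (xv : Asg Val) (Y : Finset ν)
    (yv a : Asg Val) :
    M.cfBasic X xv Y yv a * M.exoProb a
      = (∑ b ∈ M.cfWorlds X xv Y yv a, M.endoProb X b) * M.exoProb a := by
  have hnorm : (∑ b : Asg Val, if ∀ i ∈ M.exo, b i = a i then M.pdo X xv b else 0)
      = M.exoProb a := by
    have h := hM.sum_pdo hX xv ∅ yv a
    rw [hM.sum_endoProb hX, mul_one] at h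
    simpa only [notMem_empty, false_imp_iff, implies_true, and_true] using h
  rw [cfBasic, hM.sum_pdo hX, hnorm]
  by_cases ha : M.exoProb a = 0
  · simp only [ha, mul_zero]
  · rw [mul_div_cancel_left₀ _ ha]

lemma refine (hM : M.WF) (a : Asg Val) : (M.refine a).WF where
  pa_exo := hM.pa_exo
  acyclic := hM.acyclic
  cpt_pa i w w' x h := by
    have hactual : (∀ j ∈ M.pa i, w j = a j) ↔ ∀ j ∈ M.pa i, w' j = a j :=
      forall₂_congr fun j hj => by rw [h j hj]
    simp only [CM.refine, hactual, hM.cpt_pa i w w' x h]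
  cpt_nonneg i w x := by
    simp only [CM.refine]
    split_ifs
    exacts [zero_le_one, le_rfl, hM.cpt_nonneg i w x]
  cpt_sum i w := by
    simp only [CM.refine]
    split_ifs
    · exact Fintype.sum_ite_eq' (a i) fun _ => 1
    · exact hM.cpt_sum i w

lemma pbBasic_mul_joint (hM : M.WF) {X : Finset ν} (hX : ∀ i ∈ X, i ∉ M.exo) (xv : Asg Val)
    (Y : Finset ν) (yv a : Asg Val) :
    M.pbBasic a X xv Y yv * M.joint a
      = M.joint a * ∑ b ∈ M.cfWorlds X xv Y yv a, (M.refine a).endoProb X b := by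
  have hbasic := (hM.refine a).cfBasic_mul_exoProb hX xv Y yv a
  rw [exoProb_refine] at hbasic
  rw [pbBasic, joint_eq_exoProb_mul_endoProb, ← mul_assoc, hbasic, mul_comm (∑ b ∈ _, _),
    mul_right_comm]
  rfl

end WF

end Interventions

end CM

section ExtendedWorlds

variable {ν β : Type} {Val : ν → Type} {B : β → Type}

/-- The world of an extended signature made of a world `a` on the original variables and of values
`p` of the added ones. -/
def joinAsg (a : Asg Val) (p : Asg B) : Asg (SumVal Val B) := fun i =>
  match i with
  | .inl j => a j
  | .inr q => p q

/-- Unification has to find the enumeration of the extended worlds: instance search compares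
variables by `instDecidableEqSum`, the definitions of the probabilities do so classically. -/
lemma sum_joinAsg [Fintype (Asg Val)] [Fintype (Asg B)] {_ : Fintype (Asg (SumVal Val B))}
    (f : Asg (SumVal Val B) → ℝ) : ∑ W, f W = ∑ a : Asg Val, ∑ p : Asg B, f (joinAsg a p) := by
  let e : Asg (SumVal Val B) ≃ Asg Val × Asg B := Equiv.sumPiEquivProdPi (SumVal Val B)
  rw [← Fintype.sum_prod_type']
  refine Fintype.sum_equiv e _ _ fun W => congrArg f (funext fun i => ?_)
  cases i <;> rfl

lemma joinAsg_eq_liftAsg_iff [∀ b, Nonempty (B b)] (Z : Finset ν) (zv a : Asg Val) (p : Asg B) :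
    (∀ i ∈ Z.image Sum.inl, joinAsg a p i = liftAsg zv i) ↔ ∀ i ∈ Z, a i = zv i :=
  forall_mem_image

end ExtendedWorlds

namespace CM

section PotentialOutcomes

variable {ν : Type} {Val : ν → Type} (M : CM ν Val)

/-- The potential outcome variable `X_{pa_X}` that the structural equation of the endogenous
variable `j` selects in the world `w`. -/
def activePO (w : Asg Val) (j : {i // i ∉ M.exo}) : M.POI := ⟨j, fun k => w k.1⟩

/-- Under the intervention on `X`, the world `b` solves the structural equations of the PO-SCM
whose potential outcomes have the values `p`. -/
def Solves (p : Asg (POB M)) (X : Finset ν) (b : Asg Val) : Prop :=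
  ∀ j : {i // i ∉ M.exo}, j.1 ∉ X → p (M.activePO b j) = b j.1

lemma activePO_injective (w : Asg Val) : Function.Injective (M.activePO w) :=
  fun _ _ h => congrArg Sigma.fst h

variable [∀ i, Nonempty (Val i)]

lemma extendPa_apply {i : ν} (κ : M.PaAsg i) (k : {j // j ∈ M.pa i}) :
    M.extendPa i κ k.1 = κ k :=
  dif_pos k.2

/-- The distribution of the potential outcome variable `q` in the PO-SCM. -/
def poDist (q : M.POI) (x : POB M q) : ℝ := M.cpt q.1.1 (M.extendPa q.1.1 q.2) x

variable [Fintype ν]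

lemma poDist_refine_activePO (a : Asg Val) (j : {i // i ∉ M.exo}) (x : Val j.1) :
    (M.refine a).poDist (M.activePO a j) x = if x = a j.1 then 1 else 0 :=
  if_pos ⟨j.2, fun k hk => M.extendPa_apply _ ⟨k, hk⟩⟩

lemma poDist_refine_of_notMem_range {a : Asg Val} {q : M.POI} (hq : q ∉ Set.range (M.activePO a))
    (x : POB M q) : (M.refine a).poDist q x = M.poDist q x := by
  refine if_neg fun h => hq ⟨q.1, Sigma.ext rfl (heq_of_eq (funext fun k => ?_))⟩
  exact (h.2 k.1 k.2).symm.trans (M.extendPa_apply q.2 k)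

variable [∀ i, Fintype (Val i)]

/-- The joint distribution of the potential outcome variables in the PO-SCM. -/
def poProb (p : Asg (POB M)) : ℝ := ∏ q, M.poDist q (p q)

namespace WF

variable {M}

lemma poDist_activePO (hM : M.WF) (w : Asg Val) (j : {i // i ∉ M.exo}) (x : Val j.1) :
    M.poDist (M.activePO w j) x = M.cpt j.1 w x :=
  hM.cpt_pa _ _ _ _ fun k hk => M.extendPa_apply _ ⟨k, hk⟩

lemma sum_poDist (hM : M.WF) (q : M.POI) : ∑ x, M.poDist q x = 1 :=
  hM.cpt_sum _ _

lemma poProb_eq_of_solves (hM : M.WF) {a : Asg Val} {p : Asg (POB M)} (h : M.Solves p ∅ a) :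
    M.poProb p = M.endoProb ∅ a * (M.refine a).poProb p := by
  let g (q : M.POI) : ℝ := if q ∈ Set.range (M.activePO a) then M.poDist q (p q) else 1
  have hselected : M.endoProb ∅ a = ∏ q, g q := by
    rw [endoProb_eq_prod_subtype]
    refine Fintype.prod_of_injective _ (M.activePO_injective a) _ _ (fun q hq => if_neg hq) ?_
    intro j
    rw [if_neg (notMem_empty _), ← hM.poDist_activePO, ← h j (notMem_empty _)]
    exact (if_pos ⟨j, rfl⟩).symm
  rw [hselected]
  refine (prod_congr rfl fun q _ => ?_).trans prod_mul_distrib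
  by_cases hq : q ∈ Set.range (M.activePO a)
  · obtain ⟨j, rfl⟩ := hq
    have hfixed : (M.refine a).poDist (M.activePO a j) (p (M.activePO a j)) = 1 :=
      (M.poDist_refine_activePO a j _).trans (if_pos (h j (notMem_empty _)))
    rw [hfixed, mul_one]
    exact (if_pos ⟨j, rfl⟩).symm
  · rw [poDist_refine_of_notMem_range M hq]
    simp only [g, if_neg hq, one_mul]

/-- Bayes' rule: given the actual world `a`, the potential outcomes that `a` selects are known and
the others keep their distribution. -/
lemma ite_solves_poProb (hM : M.WF) (a : Asg Val) (p : Asg (POB M)) :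
    (if M.Solves p ∅ a then M.poProb p else 0) = M.endoProb ∅ a * (M.refine a).poProb p := by
  split_ifs with h
  · exact hM.poProb_eq_of_solves h
  · obtain ⟨j, hj⟩ : ∃ j : {i // i ∉ M.exo}, p (M.activePO a j) ≠ a j.1 := by
      simpa only [Solves, notMem_empty, not_false_eq_true, forall_const, not_forall] using h
    have hzero : (M.refine a).poProb p = 0 :=
      prod_eq_zero (mem_univ (M.activePO a j))
        ((M.poDist_refine_activePO a j _).trans (if_neg hj))
    rw [hzero, mul_zero]

/-- Distinct variables read distinct potential outcomes in `b`, so independence turns the event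
that `b` solves the structural equations into a product. -/
lemma sum_ite_solves_poProb (hM : M.WF) (X : Finset ν) (b : Asg Val) :
    ∑ p : Asg (POB M), (if M.Solves p X b then M.poProb p else 0) = M.endoProb X b := by
  let S (q : M.POI) : Finset (POB M q) := {v | M.activePO b q.1 = q → q.1.1 ∉ X → v = b q.1.1}
  have hsolves (p : Asg (POB M)) : M.Solves p X b ↔ p ∈ Fintype.piFinset S := by
    simp only [Fintype.mem_piFinset, S, mem_filter_univ]
    constructor
    · intro h q hq hqX
      obtain ⟨j, rfl⟩ : ∃ j, M.activePO b j = q := ⟨q.1, hq⟩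
      exact h j hqX
    · exact fun h j hjX => h (M.activePO b j) rfl hjX
  have hmass_selected (j : {i // i ∉ M.exo}) :
      (if j.1 ∈ X then 1 else M.cpt j.1 b (b j.1))
        = ∑ v ∈ S (M.activePO b j), M.poDist (M.activePO b j) v := by
    have hmem (v : Val j.1) : v ∈ S (M.activePO b j) ↔ (j.1 ∉ X → v = b j.1) :=
      (mem_filter_univ v).trans (forall_prop_of_true rfl)
    split_ifs with hjX
    · have hS : S (M.activePO b j) = univ := eq_univ_of_forall fun v => (hmem v).2 (absurd hjX)
      rw [hS, hM.sum_poDist]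
    · have hS : S (M.activePO b j) = {b j.1} :=
        Finset.ext fun v => (hmem v).trans ((forall_prop_of_true hjX).trans mem_singleton.symm)
      rw [hS, ← hM.poDist_activePO]
      exact (sum_singleton _ _).symm
  have hmass_other (q : M.POI) (hq : q ∉ Set.range (M.activePO b)) :
      ∑ v ∈ S q, M.poDist q v = 1 := by
    have hS : S q = univ := filter_true_of_mem fun v _ h => (hq ⟨q.1, h⟩).elim
    rw [hS, hM.sum_poDist]
  calc ∑ p : Asg (POB M), (if M.Solves p X b then M.poProb p else 0)
    _ = ∑ p ∈ Fintype.piFinset S, M.poProb p := by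
      simp only [hsolves]
      rw [sum_ite_mem, univ_inter]
    _ = ∏ q, ∑ v ∈ S q, M.poDist q v := (prod_univ_sum _ _).symm
    _ = M.endoProb X b := by
      rw [endoProb_eq_prod_subtype]
      exact (Fintype.prod_of_injective _ (M.activePO_injective b) _ _ hmass_other
        hmass_selected).symm

end WF

end PotentialOutcomes

section POSCM

variable {ν : Type} {Val : ν → Type} [Fintype ν] [∀ i, Fintype (Val i)] [∀ i, Nonempty (Val i)]
variable (M : CM ν Val)

lemma mem_exo_MN_inl (i : ν) : Sum.inl i ∈ M.MN.exo ↔ i ∈ M.exo := by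
  simp [MN]

lemma mem_exo_MN_inr (q : M.POI) : Sum.inr q ∈ M.MN.exo := by
  simp [MN]

lemma inl_mem_pa_MN {i k : ν} (hk : k ∈ M.pa i) : Sum.inl k ∈ M.MN.pa (Sum.inl i) :=
  mem_union_left _ (mem_image_of_mem _ hk)

lemma inr_mem_pa_MN (q : M.POI) : Sum.inr q ∈ M.MN.pa (Sum.inl q.1.1) :=
  mem_union_right _ (mem_image_of_mem _ (mem_filter.mpr ⟨mem_univ _, rfl⟩))

lemma apply_activePO_congr (j : {i // i ∉ M.exo}) {W W' : Asg (SumVal Val (POB M))}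
    (h : ∀ k ∈ M.MN.pa (Sum.inl j.1), W k = W' k) :
    (W (Sum.inr (M.activePO (fun k => W (Sum.inl k)) j)) : Val j.1)
      = W' (Sum.inr (M.activePO (fun k => W' (Sum.inl k)) j)) := by
  let κ : M.PaAsg j.1 := fun k => W (Sum.inl k.1)
  let κ' : M.PaAsg j.1 := fun k => W' (Sum.inl k.1)
  have hparents : κ = κ' := funext fun k => h _ (M.inl_mem_pa_MN k.2)
  let value (σ : M.PaAsg j.1) : Val j.1 := W' (Sum.inr ⟨j, σ⟩)
  have hvalue : W (Sum.inr ⟨j, κ⟩) = value κ := h _ (M.inr_mem_pa_MN ⟨j, κ⟩)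
  exact hvalue.trans (congrArg value hparents)

lemma exoProb_MN (a : Asg Val) (p : Asg (POB M)) :
    M.MN.exoProb (joinAsg a p) = M.exoProb a * M.poProb p := by
  have hdisj : Disjoint (M.exo.image Sum.inl) (univ.image (Sum.inr : M.POI → ν ⊕ M.POI)) := by
    simp [disjoint_left]
  have hinl (i : ν) (hi : i ∈ M.exo) :
      M.MN.cpt (Sum.inl i) (joinAsg a p) (joinAsg a p (Sum.inl i)) = M.cpt i a (a i) :=
    dif_pos hi
  refine (prod_union hdisj).trans ?_
  rw [prod_image Sum.inl_injective.injOn, prod_image Sum.inr_injective.injOn, prod_congr rfl hinl]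
  rfl

lemma cpt_MN_inl (b : Asg Val) (p : Asg (POB M)) (j : {i // i ∉ M.exo}) :
    M.MN.cpt (Sum.inl j.1) (joinAsg b p) (joinAsg b p (Sum.inl j.1))
      = if p (M.activePO b j) = b j.1 then 1 else 0 :=
  (dif_neg j.2).trans (if_congr eq_comm rfl rfl)

lemma endoProb_MN (X : Finset ν) (b : Asg Val) (p : Asg (POB M)) :
    M.MN.endoProb (X.image Sum.inl) (joinAsg b p) = if M.Solves p X b then 1 else 0 := by
  have hendo : M.MN.endoProb (X.image Sum.inl) (joinAsg b p)
      = ∏ i ∈ M.exoᶜ \ X, M.MN.cpt (Sum.inl i) (joinAsg b p) (joinAsg b p (Sum.inl i)) := by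
    rw [← prod_image (f := fun i => M.MN.cpt i (joinAsg b p) (joinAsg b p i))
      Sum.inl_injective.injOn]
    refine prod_congr ?_ fun _ _ => rfl
    ext (i | q)
    · simp [mem_exo_MN_inl]
    · simp [mem_exo_MN_inr]
  rw [hendo]
  split_ifs with h
  · refine prod_eq_one fun i hi => ?_
    obtain ⟨hi_exo, hiX⟩ := mem_sdiff.mp hi
    exact (M.cpt_MN_inl b p ⟨i, mem_compl.mp hi_exo⟩).trans (if_pos (h _ hiX))
  · obtain ⟨j, hjX, hj⟩ : ∃ j : {i // i ∉ M.exo}, j.1 ∉ X ∧ p (M.activePO b j) ≠ b j.1 := by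
      simpa only [Solves, not_forall, exists_prop] using h
    exact prod_eq_zero (mem_sdiff.mpr ⟨mem_compl.mpr j.2, hjX⟩)
      ((M.cpt_MN_inl b p j).trans (if_neg hj))

lemma joinAsg_mem_cfWorlds_MN (X : Finset ν) (xv : Asg Val) (Y : Finset ν) (yv a b : Asg Val)
    (p p' : Asg (POB M)) :
    joinAsg b p' ∈ M.MN.cfWorlds (X.image Sum.inl) (liftAsg xv) (Y.image Sum.inl) (liftAsg yv)
        (joinAsg a p) ↔ p' = p ∧ b ∈ M.cfWorlds X xv Y yv a := by
  have hexo : (∀ i ∈ M.MN.exo, joinAsg b p' i = joinAsg a p i)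
      ↔ p' = p ∧ ∀ i ∈ M.exo, b i = a i := by
    rw [funext_iff, and_comm, Sum.forall]
    exact and_congr (forall_congr' fun i => imp_congr (M.mem_exo_MN_inl i) Iff.rfl)
      (forall_congr' fun q => forall_prop_of_true (M.mem_exo_MN_inr q))
  simp only [cfWorlds, mem_filter_univ, hexo, joinAsg_eq_liftAsg_iff, and_assoc]

lemma sum_cfWorlds_MN (X : Finset ν) (xv : Asg Val) (Y : Finset ν) (yv a : Asg Val)
    (p : Asg (POB M)) :
    ∑ W ∈ M.MN.cfWorlds (X.image Sum.inl) (liftAsg xv) (Y.image Sum.inl) (liftAsg yv)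
        (joinAsg a p), M.MN.endoProb (X.image Sum.inl) W
      = ∑ b ∈ M.cfWorlds X xv Y yv a, if M.Solves p X b then 1 else 0 := by
  rw [← sum_ite_mem_eq, sum_joinAsg]
  simp only [joinAsg_mem_cfWorlds_MN, endoProb_MN, ite_and, Fintype.sum_ite_eq']
  rw [sum_ite_mem_eq]

variable {M}

namespace WF

protected lemma MN (hM : M.WF) : M.MN.WF where
  pa_exo := by
    rintro (i | q) hi
    · have hi' : i ∈ M.exo := (M.mem_exo_MN_inl i).mp hi
      ext (k | q)
      · simp [CM.MN, hM.pa_exo i hi']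
      · simpa [CM.MN] using ne_of_mem_of_not_mem hi' q.1.2 |>.symm
    · rfl
  acyclic := by
    rintro (i | q) (j | q') hj
    · have hj' : j ∈ M.pa i := by simpa [CM.MN] using hj
      exact Nat.succ_lt_succ (hM.acyclic i j hj')
    · exact Nat.succ_pos _
    · simp [CM.MN] at hj
    · simp [CM.MN] at hj
  cpt_pa := by
    rintro (i | q) w w' x h
    · by_cases hi : i ∈ M.exo
      · simpa only [CM.MN, dif_pos hi]
          using hM.cpt_pa i _ _ x fun k hk => h _ (M.inl_mem_pa_MN hk)
      · simp only [CM.MN, dif_neg hi]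
        exact if_congr (iff_of_eq (congrArg (x = ·) (M.apply_activePO_congr ⟨i, hi⟩ h))) rfl rfl
    · rfl
  cpt_nonneg := by
    rintro (i | q) w x
    · simp only [CM.MN]
      split_ifs
      exacts [hM.cpt_nonneg i _ x, zero_le_one, le_rfl]
    · exact hM.cpt_nonneg _ _ _
  cpt_sum := by
    rintro (i | q) w
    · simp only [CM.MN]
      split_ifs
      · exact hM.cpt_sum i _
      · exact Fintype.sum_ite_eq' _ fun _ => 1
    · exact hM.cpt_sum _ _

lemma joint_MN (hM : M.WF) (a : Asg Val) (p : Asg (POB M)) :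
    M.MN.joint (joinAsg a p) = M.joint a * (M.refine a).poProb p := by
  have hsolves := M.endoProb_MN ∅ a p
  rw [image_empty] at hsolves
  rw [joint_eq_exoProb_mul_endoProb, exoProb_MN, hsolves, mul_assoc, mul_boole,
    hM.ite_solves_poProb, joint_eq_exoProb_mul_endoProb, mul_assoc]

lemma sum_poProb (hM : M.WF) : ∑ p : Asg (POB M), M.poProb p = 1 :=
  (Fintype.prod_sum _).symm.trans (prod_eq_one fun q _ => hM.sum_poDist q)

lemma sum_joint_MN (hM : M.WF) (a : Asg Val) :
    ∑ p : Asg (POB M), M.MN.joint (joinAsg a p) = M.joint a := by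
  calc ∑ p : Asg (POB M), M.MN.joint (joinAsg a p)
    _ = M.joint a * ∑ p : Asg (POB (M.refine a)), (M.refine a).poProb p := by
      rw [mul_sum]
      exact sum_congr rfl fun p _ => hM.joint_MN a p
    _ = M.joint a := by rw [(hM.refine a).sum_poProb, mul_one]

lemma cfBasic_mul_joint_MN (hM : M.WF) {X : Finset ν} (hX : ∀ i ∈ X, i ∉ M.exo) (xv : Asg Val)
    (Y : Finset ν) (yv a : Asg Val) (p : Asg (POB M)) :
    M.MN.cfBasic (X.image Sum.inl) (liftAsg xv) (Y.image Sum.inl) (liftAsg yv) (joinAsg a p)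
        * M.MN.joint (joinAsg a p)
      = M.joint a * ∑ b ∈ M.cfWorlds X xv Y yv a,
          if (M.refine a).Solves p X b then (M.refine a).poProb p else 0 := by
  have hX' : ∀ i ∈ X.image Sum.inl, i ∉ M.MN.exo :=
    forall_mem_image.mpr fun i hi h => hX i hi ((M.mem_exo_MN_inl i).mp h)
  have hbasic := hM.MN.cfBasic_mul_exoProb hX' (liftAsg xv) (Y.image Sum.inl) (liftAsg yv)
    (joinAsg a p)
  rw [joint_eq_exoProb_mul_endoProb, ← mul_assoc, hbasic, sum_cfWorlds_MN, mul_assoc,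
    ← joint_eq_exoProb_mul_endoProb, hM.joint_MN, mul_left_comm, sum_mul]
  exact congrArg _ (sum_congr rfl fun b _ => boole_mul _ _)

lemma sum_cfBasic_mul_joint_MN (hM : M.WF) {X : Finset ν} (hX : ∀ i ∈ X, i ∉ M.exo)
    (xv : Asg Val) (Y : Finset ν) (yv a : Asg Val) :
    ∑ p : Asg (POB M), M.MN.cfBasic (X.image Sum.inl) (liftAsg xv) (Y.image Sum.inl)
        (liftAsg yv) (joinAsg a p) * M.MN.joint (joinAsg a p)
      = M.pbBasic a X xv Y yv * M.joint a := by
  simp_rw [hM.cfBasic_mul_joint_MN hX, hM.pbBasic_mul_joint hX, ← mul_sum]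
  rw [sum_comm]
  exact congrArg _ (sum_congr rfl fun b _ => (hM.refine a).sum_ite_solves_poProb X b)

end WF

end POSCM

end CM

theorem PS_B_eq_PS_N_general {ν : Type} {Val : ν → Type} [Fintype ν] [∀ i, Fintype (Val i)]
    [∀ i, Nonempty (Val i)] (M : CM ν Val) (hM : M.WF) (e : CFEvent ν Val)
    (he : ∀ i ∈ e.X, i ∉ M.exo) (Z : Finset ν) (zv : Asg Val)
    (_hpos : 0 < ∑ w : Asg Val, if ∀ i ∈ Z, w i = zv i then M.joint w else 0) :
    M.pbProbCond [e] Z zv = M.pnProbCond [e] Z zv := by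
  unfold CM.pbProbCond CM.pnProbCond extProbCond CM.cfProbCond
  rw [sum_joinAsg, sum_joinAsg]
  simp only [joinAsg_eq_liftAsg_iff, List.map_cons, List.map_nil, List.prod_cons, List.prod_nil,
    mul_one, liftCFEvent, ite_mul, zero_mul, sum_ite_irrel, sum_const_zero,
    hM.sum_cfBasic_mul_joint_MN he, hM.sum_joint_MN]

/-- **Proposition 3 (PS).** Given a causal model `M` and any two binary endogenous
variables `X, Y ∈ V` (with two values, `0` and `1`) such that `P_M(X=0, Y=0) > 0`:
the Probability of Sufficiency computed via the B-semantics equals the one computed in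
the PO-SCM, i.e.
`PS^B = P^B((Y=1)_{X←1} | X=0, Y=0) = P^N((Y=1)_{X←1} | X=0, Y=0) = PS^N`. -/
theorem PS_B_eq_PS_N
    {ν : Type} {Val : ν → Type} [Fintype ν] [∀ i, Fintype (Val i)] [∀ i, Nonempty (Val i)]
    (M : CM ν Val) (hM : M.WF)
    (X Y : ν) (hX : X ∉ M.exo) (hY : Y ∉ M.exo) (hXY : X ≠ Y)
    (x0 x1 : Val X) (hx : x0 ≠ x1) (hxbin : ∀ v : Val X, v = x0 ∨ v = x1)
    (y0 y1 : Val Y) (hy : y0 ≠ y1) (hybin : ∀ v : Val Y, v = y0 ∨ v = y1)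
    (hpos : 0 < ∑ w : Asg Val, if w X = x0 ∧ w Y = y0 then M.joint w else 0) :
    M.pbProbCond [⟨{X}, Function.update (dfltAsg Val) X x1, {Y}, Function.update (dfltAsg Val) Y y1⟩]
        {X, Y} (Function.update (Function.update (dfltAsg Val) X x0) Y y0)
    = M.pnProbCond [⟨{X}, Function.update (dfltAsg Val) X x1, {Y}, Function.update (dfltAsg Val) Y y1⟩]
        {X, Y} (Function.update (Function.update (dfltAsg Val) X x0) Y y0) := by
  refine PS_B_eq_PS_N_general M hM _ (by simpa using hX) _ _ ?_
  simpa [Function.update_of_ne hXY] using hpos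

end
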